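/- Let μ > 0, n a positive integer, and f : [0,1] → ℝ continuous. Then for every x ∈ [0,1], |L_n(f, x) − f(x)| ≤ ln(2+μ) · ω(f_μ, 1/√n) · (2 + √n · γ_n), where f_μ(t) := f(t)/ln(1+μ+t), γ_n := max_{x ∈ [0,1]} (a_n(x) − x), and ω(g, δ) := sup{ |g(x) − g(y)| : x, y ∈ [0,1], |x − y| ≤ δ } is the modulus of continuity. -/

import Mathlib

open Real Filter Set

/-- `logμ μ x = ln(1+μ+x)`. -/
noncomputable def logμ (μ x : ℝ) : ℝ := Real.log (1 + μ + x)

/-- `a μ n x = ln(1 + x/(n(1+μ))) / ln(1 + 1/(n(1+μ)))`. -/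
noncomputable def aFun (μ : ℝ) (n : ℕ) (x : ℝ) : ℝ :=
  Real.log (1 + x / (n * (1 + μ))) / Real.log (1 + 1 / (n * (1 + μ)))

/-- Bernstein basis polynomial `p_{n,k}(y) = C(n,k) y^k (1-y)^(n-k)`. -/
noncomputable def pB (n k : ℕ) (y : ℝ) : ℝ :=
  (n.choose k : ℝ) * y ^ k * (1 - y) ^ (n - k)

/-- Classical Bernstein operator. -/
noncomputable def Bop (n : ℕ) (g : ℝ → ℝ) (y : ℝ) : ℝ :=
  ∑ k ∈ Finset.range (n + 1), g ((k : ℝ) / (n : ℝ)) * pB n k y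

/-- Bernstein-type logarithmic operator `L_n`. -/
noncomputable def Lop (μ : ℝ) (n : ℕ) (f : ℝ → ℝ) (x : ℝ) : ℝ :=
  logμ μ x * ∑ k ∈ Finset.range (n + 1),
    f ((k : ℝ) / (n : ℝ)) * (1 / logμ μ ((k : ℝ) / (n : ℝ))) * pB n k (aFun μ n x)

/-- Modulus of continuity of `g` on `[0,1]`. -/
noncomputable def modCont (g : ℝ → ℝ) (δ : ℝ) : ℝ :=
  sSup {d : ℝ | ∃ x ∈ Set.Icc (0:ℝ) 1, ∃ y ∈ Set.Icc (0:ℝ) 1, |x - y| ≤ δ ∧ d = |g x - g y|}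

/-- `γ_n := max_{x ∈ [0,1]} (a_n(x) - x)`. -/
noncomputable def gammaN (μ : ℝ) (n : ℕ) : ℝ :=
  sSup ((fun x => aFun μ n x - x) '' Set.Icc (0:ℝ) 1)

/-! Dividing by `ln_μ` turns `L_n` into the Bernstein operator `B_n`, evaluated at `a_n(x)` instead
of `x`: with `g = f_μ` and `y = a_n(x) ∈ [x, 1]`, `L_n(f, x) - f x = ln_μ(x) (B_n(g, y) - g x)`.
Subdividing the interval from `x` to `t` into steps of length at most `1/√n` gives
`|g t - g x| ≤ (1 + √n |t - y| + √n (y - x)) ω(g, 1/√n)`. Now average over `t = k/n` with the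
Bernstein weights at `y`. They have mean `y` and variance `y (1 - y) / n ≤ 1 / (4 n)`, so the middle
term contributes at most `1/2`; the last one contributes at most `√n γ_n`. -/

section ModulusOfContinuity

variable {g : ℝ → ℝ} {δ : ℝ}

lemma modCont_nonneg : 0 ≤ modCont g δ := by
  refine Real.sSup_nonneg ?_
  rintro _ ⟨x, -, y, -, -, rfl⟩
  exact abs_nonneg _

variable {x y : ℝ}

lemma abs_sub_le_modCont (hg : Bornology.IsBounded (g '' Icc 0 1)) (hx : x ∈ Icc (0 : ℝ) 1)
    (hy : y ∈ Icc (0 : ℝ) 1) (hxy : |x - y| ≤ δ) : |g x - g y| ≤ modCont g δ := by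
  obtain ⟨C, hC⟩ := Metric.isBounded_image_iff.mp hg
  refine le_csSup ⟨C, ?_⟩ ⟨x, hx, y, hy, hxy, rfl⟩
  rintro _ ⟨u, hu, v, hv, -, rfl⟩
  exact hC u hu v hv

lemma abs_sub_le_natCast_mul_modCont (hg : Bornology.IsBounded (g '' Icc 0 1))
    (hx : x ∈ Icc (0 : ℝ) 1) (hy : y ∈ Icc (0 : ℝ) 1) (m : ℕ) (hxy : |x - y| ≤ m * δ) :
    |g x - g y| ≤ m * modCont g δ := by
  obtain rfl | hm := m.eq_zero_or_pos
  · obtain rfl : x = y := by simpa [sub_eq_zero] using hxy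
    simp
  have hm' : (0 : ℝ) < m := by exact_mod_cast hm
  let z : ℕ → ℝ := fun i ↦ AffineMap.lineMap x y (i / m : ℝ)
  have z_mem {i : ℕ} (hi : i ≤ m) : z i ∈ Icc (0 : ℝ) 1 :=
    (convex_Icc 0 1).lineMap_mem hx hy
      ⟨by positivity, div_le_one_of_le₀ (by exact_mod_cast hi) hm'.le⟩
  have z_step (i : ℕ) : |z i - z (i + 1)| ≤ δ := by
    have hdist : dist (i / m : ℝ) ((i + 1 : ℕ) / m : ℝ) = 1 / m := by
      rw [Real.dist_eq, ← sub_div, abs_div, abs_of_pos hm']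
      simp
    rw [← Real.dist_eq, dist_lineMap_lineMap, hdist, Real.dist_eq, one_div_mul_eq_div,
      div_le_iff₀' hm']
    exact hxy
  have z_chain := dist_le_range_sum_of_dist_le (f := g ∘ z) (d := fun _ ↦ modCont g δ) m
    fun {i} hi ↦ abs_sub_le_modCont hg (z_mem hi.le) (z_mem hi) (z_step i)
  simpa [z, hm'.ne', Real.dist_eq] using z_chain

lemma abs_sub_le_one_add_div_mul_modCont (hg : Bornology.IsBounded (g '' Icc 0 1)) (hδ : 0 < δ)
    (hx : x ∈ Icc (0 : ℝ) 1) (hy : y ∈ Icc (0 : ℝ) 1) :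
    |g x - g y| ≤ (1 + |x - y| / δ) * modCont g δ := by
  have hceil : |x - y| ≤ ⌈|x - y| / δ⌉₊ * δ := (div_le_iff₀ hδ).mp (Nat.le_ceil _)
  have hceil_le : (⌈|x - y| / δ⌉₊ : ℝ) ≤ 1 + |x - y| / δ := by
    rw [add_comm]
    exact (Nat.ceil_lt_add_one (by positivity)).le
  exact (abs_sub_le_natCast_mul_modCont hg hx hy _ hceil).trans
    (mul_le_mul_of_nonneg_right hceil_le modCont_nonneg)

end ModulusOfContinuity

section BernsteinOperator

lemma pB_nonneg (n k : ℕ) {y : ℝ} (hy : y ∈ Icc (0 : ℝ) 1) : 0 ≤ pB n k y := by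
  have hy₀ : 0 ≤ y := hy.1
  have hy₁ : 0 ≤ 1 - y := sub_nonneg.mpr hy.2
  unfold pB
  positivity

lemma pB_eq_eval_bernsteinPolynomial (n k : ℕ) (y : ℝ) :
    pB n k y = (bernsteinPolynomial ℝ n k).eval y := by
  simp [pB, bernsteinPolynomial]

lemma sum_pB (n : ℕ) (y : ℝ) : ∑ k ∈ Finset.range (n + 1), pB n k y = 1 := by
  simp_rw [pB_eq_eval_bernsteinPolynomial]
  rw [← Polynomial.eval_finsetSum, bernsteinPolynomial.sum, Polynomial.eval_one]

lemma Bop_const_add_const_mul (n : ℕ) (c d : ℝ) (g : ℝ → ℝ) (y : ℝ) :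
    Bop n (fun t ↦ c + d * g t) y = c + d * Bop n g y := by
  simp only [Bop, add_mul, mul_assoc, Finset.sum_add_distrib, ← Finset.mul_sum, sum_pB, mul_one]

variable {n : ℕ} {y : ℝ}

lemma Bop_le_Bop {g h : ℝ → ℝ} (hgh : ∀ t ∈ Icc (0 : ℝ) 1, g t ≤ h t)
    (hy : y ∈ Icc (0 : ℝ) 1) : Bop n g y ≤ Bop n h y := by
  refine Finset.sum_le_sum fun k hk ↦ mul_le_mul_of_nonneg_right (hgh _ ?_) (pB_nonneg n k hy)
  have hkn : (k : ℝ) ≤ n := by exact_mod_cast Finset.mem_range_succ_iff.mp hk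
  exact ⟨by positivity, div_le_one_of_le₀ hkn n.cast_nonneg⟩

lemma abs_Bop_sub_le {g h : ℝ → ℝ} {c : ℝ} (hgh : ∀ t ∈ Icc (0 : ℝ) 1, |g t - c| ≤ h t)
    (hy : y ∈ Icc (0 : ℝ) 1) : |Bop n g y - c| ≤ Bop n h y := by
  have upper : Bop n g y ≤ c + 1 * Bop n h y := by
    rw [← Bop_const_add_const_mul]
    exact Bop_le_Bop (fun t ht ↦ by linarith [(abs_sub_le_iff.mp (hgh t ht)).1]) hy
  have lower : c + -1 * Bop n h y ≤ Bop n g y := by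
    rw [← Bop_const_add_const_mul]
    exact Bop_le_Bop (fun t ht ↦ by linarith [(abs_sub_le_iff.mp (hgh t ht)).2]) hy
  exact abs_sub_le_iff.mpr ⟨by linarith, by linarith⟩

lemma Bop_sub_sq (hn : n ≠ 0) (y : ℝ) : Bop n (fun t ↦ (t - y) ^ 2) y = y * (1 - y) / n := by
  have hn' : (n : ℝ) ≠ 0 := Nat.cast_ne_zero.mpr hn
  have variance : ∑ k ∈ Finset.range (n + 1), (n * y - k) ^ 2 * pB n k y = n * y * (1 - y) := by
    simpa [Polynomial.eval_finsetSum, pB_eq_eval_bernsteinPolynomial] using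
      congrArg (Polynomial.eval y) (bernsteinPolynomial.variance ℝ n)
  calc Bop n (fun t ↦ (t - y) ^ 2) y
      = (∑ k ∈ Finset.range (n + 1), (n * y - k) ^ 2 * pB n k y) / n ^ 2 := by
        rw [Bop, Finset.sum_div]
        refine Finset.sum_congr rfl fun k _ ↦ ?_
        field_simp
        ring
    _ = y * (1 - y) / n := by
        rw [variance]
        field_simp

lemma sqrt_mul_Bop_abs_sub_le_half (hn : n ≠ 0) (hy : y ∈ Icc (0 : ℝ) 1) :
    √n * Bop n (fun t ↦ |t - y|) y ≤ 1 / 2 := by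
  have hn' : (n : ℝ) ≠ 0 := Nat.cast_ne_zero.mpr hn
  have am_gm (t : ℝ) : √n * |t - y| ≤ 1 / 4 + n * (t - y) ^ 2 := by
    have hsq : (√n * |t - y|) ^ 2 = n * (t - y) ^ 2 := by
      rw [mul_pow, Real.sq_sqrt n.cast_nonneg, sq_abs]
    linarith [sq_nonneg (√n * |t - y| - 1 / 2)]
  calc √n * Bop n (fun t ↦ |t - y|) y
      = Bop n (fun t ↦ 0 + √n * |t - y|) y := by rw [Bop_const_add_const_mul, zero_add]
    _ ≤ Bop n (fun t ↦ 1 / 4 + n * (t - y) ^ 2) y :=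
        Bop_le_Bop (fun t _ ↦ (zero_add _).trans_le (am_gm t)) hy
    _ = 1 / 4 + y * (1 - y) := by
        rw [Bop_const_add_const_mul, Bop_sub_sq hn, mul_div_cancel₀ _ hn']
    _ ≤ 1 / 2 := by linarith [sq_nonneg (y - 1 / 2)]

theorem abs_Bop_sub_le_modCont {g : ℝ → ℝ} {x : ℝ} (hn : n ≠ 0)
    (hg : Bornology.IsBounded (g '' Icc 0 1)) (hx : x ∈ Icc (0 : ℝ) 1)
    (hy : y ∈ Icc (0 : ℝ) 1) :
    |Bop n g y - g x| ≤ modCont g (1 / √n) * (3 / 2 + √n * |y - x|) := by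
  set ω := modCont g (1 / √n)
  have hω : 0 ≤ ω := modCont_nonneg
  have hδ : 0 < 1 / √n := by positivity
  have pointwise (t : ℝ) (ht : t ∈ Icc (0 : ℝ) 1) :
      |g t - g x| ≤ ω * (1 + √n * |y - x|) + ω * √n * |t - y| :=
    calc |g t - g x| ≤ (1 + √n * |t - x|) * ω := by
          rw [← one_div_one_div √n, one_div_mul_eq_div]
          exact abs_sub_le_one_add_div_mul_modCont hg hδ ht hx
      _ ≤ (1 + √n * (|t - y| + |y - x|)) * ω := by gcongr; exact abs_sub_le t y x
      _ = ω * (1 + √n * |y - x|) + ω * √n * |t - y| := by ring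
  calc |Bop n g y - g x|
      ≤ Bop n (fun t ↦ ω * (1 + √n * |y - x|) + ω * √n * |t - y|) y :=
        abs_Bop_sub_le pointwise hy
    _ = ω * (1 + √n * |y - x| + √n * Bop n (fun t ↦ |t - y|) y) := by
        rw [Bop_const_add_const_mul]
        ring
    _ ≤ ω * (1 + √n * |y - x| + 1 / 2) := by
        gcongr
        exact sqrt_mul_Bop_abs_sub_le_half hn hy
    _ = ω * (3 / 2 + √n * |y - x|) := by ring

end BernsteinOperator

section Nodes

lemma mul_log_one_add_le_log_one_add_mul {t x : ℝ} (ht : -1 < t) (hx : x ∈ Icc (0 : ℝ) 1) :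
    x * log (1 + t) ≤ log (1 + x * t) := by
  have ht' : 0 < 1 + t := by linarith
  rw [← Real.log_rpow ht']
  exact Real.log_le_log (by positivity) (rpow_one_add_le_one_add_mul_self ht.le hx.1 hx.2)

variable {μ x : ℝ} {n : ℕ}

lemma le_aFun (hμ : -1 < μ) (hn : n ≠ 0) (hx : x ∈ Icc (0 : ℝ) 1) : x ≤ aFun μ n x := by
  have hμ' : 0 < 1 + μ := by linarith
  have ht : 0 < 1 / (n * (1 + μ)) := by positivity
  rw [aFun, le_div_iff₀ (Real.log_pos (by linarith)), div_eq_mul_one_div x]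
  exact mul_log_one_add_le_log_one_add_mul (by linarith) hx

lemma aFun_le_one (hμ : -1 < μ) (hx : x ∈ Icc (0 : ℝ) 1) : aFun μ n x ≤ 1 := by
  have hμ' : 0 < 1 + μ := by linarith
  have hx₀ : 0 ≤ x := hx.1
  have ht : 0 ≤ 1 / (n * (1 + μ)) := by positivity
  refine div_le_one_of_le₀ (Real.log_le_log (by positivity) ?_) (Real.log_nonneg (by linarith))
  gcongr
  exact hx.2

lemma aFun_sub_self_le_gammaN (hμ : -1 < μ) (hx : x ∈ Icc (0 : ℝ) 1) :
    aFun μ n x - x ≤ gammaN μ n := by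
  refine le_csSup ⟨1, ?_⟩ (mem_image_of_mem _ hx)
  rintro _ ⟨y, hy, rfl⟩
  exact (sub_le_self _ hy.1).trans (aFun_le_one hμ hy)

end Nodes

section LogarithmicOperator

lemma Lop_eq_logμ_mul_Bop (μ : ℝ) (n : ℕ) (f : ℝ → ℝ) (x : ℝ) :
    Lop μ n f x = logμ μ x * Bop n (fun t ↦ f t / logμ μ t) (aFun μ n x) := by
  simp only [Lop, Bop, div_eq_mul_one_div (f _)]

variable {μ x : ℝ}

lemma log_one_add_le_logμ (hμ : -1 < μ) (hx : 0 ≤ x) : log (1 + μ) ≤ logμ μ x :=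
  Real.log_le_log (by linarith) (by linarith)

lemma logμ_pos (hμ : 0 < μ) (hx : 0 ≤ x) : 0 < logμ μ x :=
  (Real.log_pos (by linarith)).trans_le (log_one_add_le_logμ (by linarith) hx)

lemma logμ_le_log_two_add (hμ : -1 < μ) (hx : x ∈ Icc (0 : ℝ) 1) : logμ μ x ≤ log (2 + μ) :=
  Real.log_le_log (by linarith [hx.1]) (by linarith [hx.2])

lemma isBounded_image_div_logμ {f : ℝ → ℝ} (hμ : 0 < μ)
    (hf : Bornology.IsBounded (f '' Icc 0 1)) :
    Bornology.IsBounded ((fun t ↦ f t / logμ μ t) '' Icc 0 1) := by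
  obtain ⟨C, hC⟩ := hf.exists_norm_le
  have hlog : 0 < log (1 + μ) := Real.log_pos (by linarith)
  refine isBounded_iff_forall_norm_le.mpr ⟨C / log (1 + μ), ?_⟩
  rintro _ ⟨t, ht, rfl⟩
  have hft : ‖f t‖ ≤ C := hC _ (mem_image_of_mem f ht)
  rw [norm_div, Real.norm_of_nonneg (logμ_pos hμ ht.1).le]
  exact div_le_div₀ ((norm_nonneg _).trans hft) hft hlog (log_one_add_le_logμ (by linarith) ht.1)

end LogarithmicOperator

theorem stmt9_general (μ : ℝ) (hμ : 0 < μ) (n : ℕ) (hn : n ≠ 0) (f : ℝ → ℝ)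
    (hf : Bornology.IsBounded (f '' Icc 0 1)) :
    ∀ x ∈ Icc (0 : ℝ) 1,
      |Lop μ n f x - f x| ≤
        log (2 + μ) * modCont (fun t ↦ f t / logμ μ t) (1 / √n) * (3 / 2 + √n * gammaN μ n) := by
  intro x hx
  have hμ' : -1 < μ := by linarith
  have hlog : 0 < logμ μ x := logμ_pos hμ hx.1
  have hxa : x ≤ aFun μ n x := le_aFun hμ' hn hx
  set g : ℝ → ℝ := fun t ↦ f t / logμ μ t
  set ω := modCont g (1 / √n)
  have hω : 0 ≤ ω := modCont_nonneg
  have bernstein : |Bop n g (aFun μ n x) - g x| ≤ ω * (3 / 2 + √n * gammaN μ n) :=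
    calc |Bop n g (aFun μ n x) - g x| ≤ ω * (3 / 2 + √n * |aFun μ n x - x|) :=
          abs_Bop_sub_le_modCont hn (isBounded_image_div_logμ hμ hf) hx
            ⟨hx.1.trans hxa, aFun_le_one hμ' hx⟩
      _ ≤ ω * (3 / 2 + √n * gammaN μ n) := by
          rw [abs_of_nonneg (sub_nonneg.mpr hxa)]
          gcongr
          exact aFun_sub_self_le_gammaN hμ' hx
  have f_eq : f x = logμ μ x * g x := (mul_div_cancel₀ (f x) hlog.ne').symm
  calc |Lop μ n f x - f x| = logμ μ x * |Bop n g (aFun μ n x) - g x| := by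
        rw [Lop_eq_logμ_mul_Bop, f_eq, ← mul_sub, abs_mul, abs_of_pos hlog]
    _ ≤ log (2 + μ) * (ω * (3 / 2 + √n * gammaN μ n)) :=
        mul_le_mul (logμ_le_log_two_add hμ' hx) bernstein (abs_nonneg _)
          (hlog.le.trans (logμ_le_log_two_add hμ' hx))
    _ = log (2 + μ) * ω * (3 / 2 + √n * gammaN μ n) := by ring

theorem stmt9 (μ : ℝ) (hμ : 0 < μ) (n : ℕ) (hn : 0 < n) (f : ℝ → ℝ)
    (hf : ContinuousOn f (Set.Icc (0:ℝ) 1)) :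
    ∀ x ∈ Set.Icc (0:ℝ) 1,
      |Lop μ n f x - f x| ≤
        Real.log (2 + μ) * modCont (fun t => f t / logμ μ t) (1 / Real.sqrt n) *
          (2 + Real.sqrt n * gammaN μ n) := by
  intro x hx
  have hf' : Bornology.IsBounded (f '' Icc 0 1) :=
    (isCompact_Icc.image_of_continuousOn hf).isBounded
  exact (stmt9_general μ hμ n hn.ne' f hf' x hx).trans <| mul_le_mul_of_nonneg_left (by linarith)
    (mul_nonneg (Real.log_nonneg (by linarith)) modCont_nonneg)
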